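/- Let p_1,…,p_m ≥ 2 and G = C_{p_1} * ⋯ * C_{p_m}, and let g ∈ G be a nontrivial element of finite order k. Then the expected number of fixed points of φ(g) under a uniformly random homomorphism φ : G → S_n satisfies 𝔼_n^Hom[ Z_g ] ∼ n^{1/k} as n → ∞. -/

import Mathlib

open Filter Topology Asymptotics
open scoped TensorProduct

/-- the relations `x_i ^ p_i = 1` defining `C_{p_1} * ⋯ * C_{p_m}` -/
def cyclicRels (m : ℕ) (p : Fin m → ℕ) : Set (FreeGroup (Fin m)) :=
  {w : FreeGroup (Fin m) | ∃ i : Fin m, w = FreeGroup.of i ^ p i}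

/-- the free product `C_{p_1} * ⋯ * C_{p_m}` of cyclic groups of orders `p_1, …, p_m`,
presented as `⟨x_1,…,x_m ∣ x_1^{p_1} = ⋯ = x_m^{p_m} = 1⟩`. -/
abbrev CyclicFreeProduct (m : ℕ) (p : Fin m → ℕ) : Type :=
  PresentedGroup (cyclicRels m p)

/-- the number of fixed points of the permutation `φ g` on `{1,…,n}` -/
noncomputable def homFixCount {G : Type*} [Group G] {n : ℕ} (g : G)
    (φ : G →* Equiv.Perm (Fin n)) : ℕ :=
  Nat.card {x : Fin n // φ g x = x}

/-- the expectation of `f` over a uniformly random homomorphism `G → S_n` -/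
noncomputable def homExp (G : Type*) [Group G] (n : ℕ)
    (f : (G →* Equiv.Perm (Fin n)) → ℝ) : ℝ :=
  (∑' φ : G →* Equiv.Perm (Fin n), f φ) /
    (Nat.card (G →* Equiv.Perm (Fin n)) : ℝ)

/-!
A nontrivial torsion element `g` of a free product is conjugate into a factor, so `φ g` has as many
fixed points as `σ ^ d`, where `σ` is the image of a generator `x_i` and `d * orderOf g = p i`.
Under the uniform measure on homomorphisms, `σ` is uniform among the solutions of `σ ^ p = 1` in
`S_n`, with `p = p i`. Counting pairs of such a `σ` and a cycle of `σ` of length `e ∣ d` with a base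
point gives the mean number of fixed points of `σ ^ d` as `∑_{e ∣ d} c_{n - e} / c_n`, where `c_n`
is the `n`-th Taylor coefficient of `exp (∑_{e ∣ p} z ^ e / e)`.

The saddle point method on the circle of radius `r` with `∑_{e ∣ p} r ^ e = n` gives
`c_{n - e} / c_n ∼ r ^ e ∼ n ^ (e / p)`: both contour integrals are asymptotic to the same Gaussian
integral. The term `e = d` dominates the sum and `d / p = 1 / orderOf g`.
-/

section FreeProductTorsion

open Monoid Monoid.CoprodI

variable {ι : Type*} {M : ι → Type*}

lemma word_prod_injective [∀ i, Monoid (M i)] :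
    Function.Injective (Word.prod : Word M → CoprodI M) := by
  classical exact Word.equiv.symm.injective

lemma neWord_prod_ne_one [∀ i, Monoid (M i)] {i j : ι} (w : NeWord M i j) : w.prod ≠ 1 := fun h =>
  w.toList_ne_nil <| congrArg Word.toList <|
    word_prod_injective (a₁ := w.toWord) (a₂ := Word.empty) h

lemma exists_neWord_prod_eq_pow_succ [∀ i, Monoid (M i)] {i j : ι} (hij : i ≠ j)
    (w : NeWord M i j) (n : ℕ) : ∃ v : NeWord M i j, v.prod = w.prod ^ (n + 1) := by
  induction n with
  | zero => exact ⟨w, (pow_one _).symm⟩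
  | succ n ih =>
    obtain ⟨v, hv⟩ := ih
    exact ⟨w.append hij.symm v, by rw [NeWord.append_prod, hv, ← pow_succ']⟩

lemma not_isOfFinOrder_neWord_prod [∀ i, Monoid (M i)] {i j : ι} (hij : i ≠ j)
    (w : NeWord M i j) : ¬ IsOfFinOrder w.prod := by
  rw [isOfFinOrder_iff_pow_eq_one]
  rintro ⟨n, hn, hpow⟩
  obtain ⟨v, hv⟩ := exists_neWord_prod_eq_pow_succ hij w (n - 1)
  exact neWord_prod_ne_one v (by rw [hv, Nat.sub_add_cancel hn, hpow])

variable [∀ i, Group (M i)]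

-- Conjugating by the last letter merges it with the first one, which lies in the same factor.
lemma exists_isConj_word_prod_of_same_ends {i : ι} {a b : M i} {l : List (Σ i, M i)} {w : Word M}
    (hw : w.toList = ⟨i, a⟩ :: (l ++ [⟨i, b⟩])) :
    ∃ v : Word M, v.toList.length < w.toList.length ∧ IsConj w.prod v.prod := by
  classical
  obtain ⟨hhead, hchain⟩ := List.isChain_cons.mp (hw ▸ w.chain_ne)
  let middle : Word M :=
    ⟨l, fun x hx => w.ne_one x (by simp [hw, hx]), (List.isChain_append.mp hchain).1⟩
  have hfst : middle.fstIdx ≠ some i := by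
    rw [Word.fstIdx_ne_iff]
    exact fun x hx => hhead x (List.mem_head?_append_of_mem_head? hx)
  refine ⟨Word.rcons ⟨b * a, middle, hfst⟩, ?_, isConj_iff.mpr ⟨of b, ?_⟩⟩
  · rw [Word.rcons]
    split_ifs <;> simp [hw, middle]
  · rw [Word.prod_rcons]
    simp [Word.prod, hw, middle, mul_assoc]

lemma word_prod_eq_one_or_isConj_of {w : Word M} (hw : IsOfFinOrder w.prod) :
    w.prod = 1 ∨ ∃ (i : ι) (a : M i), IsConj (of a) w.prod := by
  induction hn : w.toList.length using Nat.strong_induction_on generalizing w with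
  | _ n ih =>
    rcases eq_or_ne w Word.empty with rfl | hne
    · exact .inl Word.prod_empty
    obtain ⟨i, j, v, rfl⟩ := NeWord.of_word w hne
    obtain rfl : i = j := by_contra fun hij => not_isOfFinOrder_neWord_prod hij v hw
    obtain ⟨t, ht⟩ : ∃ t, v.toWord.toList = ⟨i, v.head⟩ :: t :=
      ⟨_, List.eq_cons_of_mem_head? v.toList_head?⟩
    rcases List.eq_nil_or_concat' t with rfl | ⟨l, y, rfl⟩
    · have hprod : v.toWord.prod = of v.head := by simp [Word.prod, ht]
      exact .inr ⟨i, v.head, hprod ▸ IsConj.refl _⟩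
    · obtain rfl : y = ⟨i, v.last⟩ := by
        have hlast := v.toList_getLast?
        change v.toWord.toList.getLast? = _ at hlast
        simpa [ht, List.getLast?_cons] using hlast
      obtain ⟨u, hlt, hconj⟩ := exists_isConj_word_prod_of_same_ends ht
      rcases ih _ (hn ▸ hlt) (hconj.isOfFinOrder hw) rfl with h | ⟨k, c, h⟩
      · exact .inl (isConj_one_right.mp (h ▸ hconj.symm))
      · exact .inr ⟨k, c, h.trans hconj.symm⟩

theorem eq_one_or_isConj_of_of_isOfFinOrder {x : CoprodI M} (hx : IsOfFinOrder x) :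
    x = 1 ∨ ∃ (i : ι) (a : M i), IsConj (of a) x := by
  classical
  obtain ⟨w, rfl⟩ := Word.equiv.symm.surjective x
  exact word_prod_eq_one_or_isConj_of hx

end FreeProductTorsion

section CyclicFreeProduct

lemma zpowers_zpow_eq_zpowers_pow_gcd {G : Type*} [Group G] (x : G) (a : ℤ) :
    Subgroup.zpowers (x ^ a) = Subgroup.zpowers (x ^ Int.gcd (orderOf x) a) := by
  apply le_antisymm <;> rw [Subgroup.zpowers_le, Subgroup.mem_zpowers_iff]
  · obtain ⟨c, hc⟩ := Int.gcd_dvd_right (orderOf x : ℤ) a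
    exact ⟨c, by rw [← zpow_natCast, ← zpow_mul, ← hc]⟩
  · refine ⟨Int.gcdB (orderOf x) a, ?_⟩
    rw [← zpow_natCast, Int.gcd_eq_gcd_ab, zpow_add, zpow_mul x (orderOf x), zpow_natCast,
      pow_orderOf_eq_one, one_zpow, one_mul, zpow_mul]

variable {m : ℕ} (p : Fin m → ℕ)

/-- The generator `x_i` of `C_{p_1} * ⋯ * C_{p_m}`. -/
def cyclicGen (i : Fin m) : CyclicFreeProduct m p := PresentedGroup.of i

lemma cyclicGen_pow (i : Fin m) : cyclicGen p i ^ p i = 1 :=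
  (map_pow (PresentedGroup.mk (cyclicRels m p)) (FreeGroup.of i) (p i)).symm.trans
    (PresentedGroup.one_of_mem ⟨i, rfl⟩)

/-- The universal property of `C_{p_1} * ⋯ * C_{p_m}`: a homomorphism to `K` amounts to a choice of
images of the generators subject to the relations `x_i ^ p_i = 1`. -/
def cyclicFreeProductHomEquiv (K : Type*) [Group K] :
    (CyclicFreeProduct m p →* K) ≃ ∀ i, {x : K // x ^ p i = 1} where
  toFun φ i := ⟨φ (cyclicGen p i), by rw [← map_pow, cyclicGen_pow, map_one]⟩
  invFun f := PresentedGroup.toGroup (f := fun i => (f i : K)) <| by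
    rintro _ ⟨i, rfl⟩
    rw [map_pow, FreeGroup.lift_apply_of, (f i).2]
  left_inv _ := PresentedGroup.ext fun _ => PresentedGroup.toGroup.of _
  right_inv _ := funext fun _ => Subtype.ext (PresentedGroup.toGroup.of _)

variable {p}

lemma cyclicFreeProductHomEquiv_symm_cyclicGen {K : Type*} [Group K]
    (f : ∀ i, {x : K // x ^ p i = 1}) (i : Fin m) :
    (cyclicFreeProductHomEquiv p K).symm f (cyclicGen p i) = f i :=
  congrArg Subtype.val (congrFun ((cyclicFreeProductHomEquiv p K).apply_symm_apply f) i)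

variable (p) in
lemma orderOf_cyclicGen (i : Fin m) : orderOf (cyclicGen p i) = p i := by
  refine Nat.dvd_antisymm (orderOf_dvd_of_pow_eq_one (cyclicGen_pow p i)) ?_
  let f (j : Fin m) : {x : Multiplicative (ZMod (p i)) // x ^ p j = 1} :=
    if h : j = i then ⟨.ofAdd 1, by rw [h, ← ofAdd_nsmul]; simp⟩ else ⟨1, one_pow _⟩
  simpa [cyclicFreeProductHomEquiv_symm_cyclicGen, f, orderOf_ofAdd_eq_addOrderOf,
    ZMod.addOrderOf_one] using
    orderOf_map_dvd ((cyclicFreeProductHomEquiv p _).symm f) (cyclicGen p i)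

lemma exists_isConj_cyclicGen_zpow {g : CyclicFreeProduct m p} (hg : IsOfFinOrder g)
    (hg_ne : g ≠ 1) : ∃ (i : Fin m) (a : ℤ), IsConj (cyclicGen p i ^ a) g := by
  let C (i : Fin m) : Subgroup (CyclicFreeProduct m p) := Subgroup.zpowers (cyclicGen p i)
  let toCoprod : CyclicFreeProduct m p →* Monoid.CoprodI fun i => C i :=
    (cyclicFreeProductHomEquiv p _).symm fun i =>
      ⟨.of ⟨cyclicGen p i, Subgroup.mem_zpowers _⟩, by
        rw [← map_pow, show (⟨cyclicGen p i, _⟩ : C i) ^ p i = 1 from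
          Subtype.ext (cyclicGen_pow p i), map_one]⟩
  let ofCoprod : (Monoid.CoprodI fun i => C i) →* CyclicFreeProduct m p :=
    Monoid.CoprodI.lift fun i => (C i).subtype
  have hretract : ofCoprod.comp toCoprod = MonoidHom.id _ := PresentedGroup.ext fun i => by
    change ofCoprod (toCoprod (cyclicGen p i)) = cyclicGen p i
    simp only [toCoprod, cyclicFreeProductHomEquiv_symm_cyclicGen, ofCoprod,
      Monoid.CoprodI.lift_of, Subgroup.subtype_apply]
  have hretract_g : ofCoprod (toCoprod g) = g := DFunLike.congr_fun hretract g
  rcases eq_one_or_isConj_of_of_isOfFinOrder (toCoprod.isOfFinOrder hg) with h | ⟨i, y, h⟩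
  · exact absurd (by rw [← hretract_g, h, map_one]) hg_ne
  · obtain ⟨a, ha⟩ := Subgroup.mem_zpowers_iff.mp y.2
    refine ⟨i, a, ?_⟩
    simpa [hretract_g, ofCoprod, ha] using ofCoprod.map_isConj h

theorem exists_zpowers_eq_and_isConj {g : CyclicFreeProduct m p} (hg : IsOfFinOrder g)
    (hg_ne : g ≠ 1) : ∃ (i : Fin m) (d : ℕ) (y : CyclicFreeProduct m p),
      p i ≠ 0 ∧ d * orderOf g = p i ∧
        Subgroup.zpowers y = Subgroup.zpowers (cyclicGen p i ^ d) ∧ IsConj y g := by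
  obtain ⟨i, a, hconj⟩ := exists_isConj_cyclicGen_zpow hg hg_ne
  set d := Int.gcd (orderOf (cyclicGen p i)) a
  have hzp := zpowers_zpow_eq_zpowers_pow_gcd (cyclicGen p i) a
  have horder : orderOf (cyclicGen p i ^ d) = orderOf g := by
    obtain ⟨c, rfl⟩ := isConj_iff.mp hconj
    rw [← Nat.card_zpowers, ← hzp, Nat.card_zpowers]
    exact ((MulAut.conj c).orderOf_eq _).symm
  have hd_ne : d ≠ 0 := by
    intro h0
    rw [h0, pow_zero, orderOf_one, eq_comm, orderOf_eq_one_iff] at horder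
    exact hg_ne horder
  have hgen : IsOfFinOrder (cyclicGen p i) :=
    IsOfFinOrder.of_pow (orderOf_pos_iff.mp (horder ▸ hg.orderOf_pos)) hd_ne
  refine ⟨i, d, _, orderOf_cyclicGen p i ▸ hgen.orderOf_pos.ne', ?_, hzp, hconj⟩
  have hdvd : d ∣ orderOf (cyclicGen p i) := Int.natCast_dvd_natCast.mp (Int.gcd_dvd_left _ _)
  rw [← horder, orderOf_pow_of_dvd hd_ne hdvd, Nat.mul_div_cancel' hdvd, orderOf_cyclicGen]

end CyclicFreeProduct

section HomFixCount

variable {G : Type*} [Group G] {n : ℕ} {x y : G}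

lemma homFixCount_eq_of_isConj (h : IsConj x y) (φ : G →* Equiv.Perm (Fin n)) :
    homFixCount x φ = homFixCount y φ := by
  obtain ⟨c, rfl⟩ := isConj_iff.mp h
  exact Nat.card_congr ((φ c).subtypeEquiv fun a => by simp)

lemma homFixCount_eq_of_zpowers_eq (h : Subgroup.zpowers x = Subgroup.zpowers y)
    (φ : G →* Equiv.Perm (Fin n)) : homFixCount x φ = homFixCount y φ := by
  have fixed_of_mem {u v : G} (huv : u ∈ Subgroup.zpowers v) (a : Fin n) (ha : φ v a = a) :
      φ u a = a := by
    obtain ⟨k, rfl⟩ := Subgroup.mem_zpowers_iff.mp huv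
    rw [map_zpow]
    exact Equiv.Perm.zpow_apply_eq_self_of_apply_eq_self ha k
  exact Nat.card_congr <| Equiv.subtypeEquivRight fun a =>
    ⟨fixed_of_mem (h ▸ Subgroup.mem_zpowers y) a, fixed_of_mem (h ▸ Subgroup.mem_zpowers x) a⟩

end HomFixCount

section CountingTorsionPerms

variable {α β : Type*}

/-- The permutations of `α` whose order divides `p`. -/
abbrev TorsionPerm (p : ℕ) (α : Type*) : Type _ := {σ : Equiv.Perm α // σ ^ p = 1}

/-- The number of elements of `S_n` whose order divides `p`. -/
noncomputable def torsionPermCount (p n : ℕ) : ℕ := Nat.card (TorsionPerm p (Fin n))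

lemma card_torsionPerm (p : ℕ) (α : Type*) [Finite α] :
    Nat.card (TorsionPerm p α) = torsionPermCount p (Nat.card α) :=
  let E : Equiv.Perm α ≃* Equiv.Perm (Fin (Nat.card α)) := (Finite.equivFin α).permCongrHom
  Nat.card_congr <| E.toEquiv.subtypeEquiv fun σ => by
    change σ ^ p = 1 ↔ E σ ^ p = 1
    rw [← map_pow, EmbeddingLike.map_eq_one_iff]

lemma card_torsionPerm_fixing [Finite α] (p : ℕ) (s : Set α) :
    Nat.card {σ : TorsionPerm p α // ∀ a ∈ s, σ.1 a = a} =
      torsionPermCount p (Nat.card α - Nat.card s) := by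
  classical
  let E := Equiv.Perm.subtypeEquivSubtypePerm (· ∉ s)
  have hE (τ : Equiv.Perm {a // a ∉ s}) : τ ^ p = 1 ↔ (E τ : Equiv.Perm α) ^ p = 1 := by
    change _ ↔ Equiv.Perm.ofSubtype τ ^ p = 1
    rw [← map_pow, map_eq_one_iff _ Equiv.Perm.ofSubtype_injective]
  have hcompl : Nat.card {a // a ∉ s} = Nat.card α - Nat.card s :=
    (Nat.card_coe_set_eq sᶜ).trans (Set.ncard_compl s)
  rw [← hcompl, ← card_torsionPerm]
  exact Nat.card_congr <|
    (Equiv.subtypeSubtypeEquivSubtypeInter (fun σ : Equiv.Perm α => σ ^ p = 1)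
      fun σ => ∀ a ∈ s, σ a = a).trans <|
    (Equiv.subtypeEquivRight fun σ => by simp only [not_not, and_comm]).trans <|
    (Equiv.subtypeSubtypeEquivSubtypeInter (fun σ : Equiv.Perm α => ∀ a, ¬ a ∉ s → σ a = a)
      fun σ => σ ^ p = 1).symm.trans
    (E.subtypeEquiv (q := fun σ : {σ : Equiv.Perm α // _} => σ.1 ^ p = 1) hE).symm

lemma card_torsionPerm_extending [Finite α] [Finite β] {p : ℕ} (f : β ↪ α) {ρ : Equiv.Perm β}
    (hρ : ρ ^ p = 1) :
    Nat.card {σ : TorsionPerm p α // ∀ b, σ.1 (f b) = f (ρ b)} =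
      torsionPermCount p (Nat.card α - Nat.card β) := by
  classical
  let E : β ≃ Set.range f := Equiv.ofInjective f f.injective
  let ρ' : Equiv.Perm α := ρ.extendDomain E
  have hρ'_apply (b : β) : ρ' (f b) = f (ρ b) := ρ.extendDomain_apply_image E b
  have hρ'_pow : ρ' ^ p = 1 := by
    rw [← Equiv.Perm.extendDomain_pow, hρ, Equiv.Perm.extendDomain_one]
  have hcond (τ : Equiv.Perm α) :
      (τ ^ p = 1 ∧ ∀ a ∈ Set.range f, τ a = a) ↔
        (ρ' * τ) ^ p = 1 ∧ ∀ b, (ρ' * τ) (f b) = f (ρ b) := by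
    simp only [Set.forall_mem_range, Equiv.Perm.mul_apply, ← hρ'_apply, ρ'.injective.eq_iff]
    refine and_congr_left fun hτ => ?_
    have hdisj : ρ'.Disjoint τ := fun a => by
      by_cases ha : a ∈ Set.range f
      · exact .inr (by obtain ⟨b, rfl⟩ := ha; exact hτ b)
      · exact .inl (ρ.extendDomain_apply_not_subtype E ha)
    rw [hdisj.commute.mul_pow, hρ'_pow, one_mul]
  rw [← Nat.card_congr E.symm, ← card_torsionPerm_fixing]
  exact Nat.card_congr <|
    (Equiv.subtypeSubtypeEquivSubtypeInter (fun σ : Equiv.Perm α => σ ^ p = 1)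
      fun σ => ∀ b, σ (f b) = f (ρ b)).trans <|
    ((Equiv.mulLeft ρ').subtypeEquiv hcond).symm.trans
    (Equiv.subtypeSubtypeEquivSubtypeInter (fun τ : Equiv.Perm α => τ ^ p = 1)
      fun τ => ∀ a ∈ Set.range f, τ a = a).symm

lemma iterate_apply_zero_of_semiconj {e : ℕ} {s : α → α} {f : ZMod e → α}
    (hf : ∀ i, s (f i) = f (i + 1)) (n : ℕ) : s^[n] (f 0) = f n := by
  induction n with
  | zero => simp
  | succ n ih => rw [Function.iterate_succ_apply', ih, hf, Nat.cast_succ]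

lemma iterate_val_add_one {e : ℕ} [NeZero e] {s : α → α} {x : α}
    (hx : Function.minimalPeriod s x = e) (i : ZMod e) :
    s (s^[i.val] x) = s^[(i + 1).val] x := by
  have hval : (i + 1).val = (i.val + 1) % e := by
    rw [← ZMod.val_natCast, Nat.cast_succ, ZMod.natCast_zmod_val]
  have hmod := Function.iterate_mod_minimalPeriod_eq (f := s) (x := x) (n := i.val + 1)
  rw [← Function.iterate_succ_apply' s, hval, ← hmod, hx]

/-- Points of exact period `e` correspond to embeddings of `ℤ/e` that carry the rotation
`i ↦ i + 1` to the given map, through `f ↦ f 0`. -/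
def rotationEmbeddingEquiv (s : α → α) (e : ℕ) [NeZero e] :
    {f : ZMod e ↪ α // ∀ i, s (f i) = f (i + 1)} ≃ {x : α // Function.minimalPeriod s x = e} where
  toFun f := ⟨f.1 0, by
    have hper (n : ℕ) : Function.IsPeriodicPt s n (f.1 0) ↔ e ∣ n := by
      rw [Function.IsPeriodicPt, Function.IsFixedPt, iterate_apply_zero_of_semiconj f.2,
        f.1.injective.eq_iff, ZMod.natCast_eq_zero_iff]
    exact Nat.dvd_antisymm ((hper e).mpr dvd_rfl).minimalPeriod_dvd
      ((hper _).mp (Function.isPeriodicPt_minimalPeriod _ _))⟩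
  invFun x := ⟨⟨fun i => s^[i.val] x, fun i j hij => ZMod.val_injective e <|
      Function.iterate_injOn_Iio_minimalPeriod (by simpa [x.2] using i.val_lt)
        (by simpa [x.2] using j.val_lt) hij⟩, iterate_val_add_one x.2⟩
  left_inv f := Subtype.ext <| DFunLike.ext _ _ fun i =>
    (iterate_apply_zero_of_semiconj f.2 i.val).trans (by rw [ZMod.natCast_zmod_val])
  right_inv x := Subtype.ext <| show s^[(0 : ZMod e).val] x = x by simp

lemma card_fixed_iterate [Finite α] (s : α → α) {d : ℕ} (hd : d ≠ 0) :
    Nat.card {x // s^[d] x = x} =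
      ∑ e ∈ d.divisors, Nat.card {x // Function.minimalPeriod s x = e} := by
  classical
  have := Fintype.ofFinite α
  simp only [Nat.card_eq_fintype_card, Fintype.card_subtype]
  rw [Finset.card_eq_sum_card_fiberwise (f := Function.minimalPeriod s) (t := d.divisors)]
  · refine Finset.sum_congr rfl fun e he => congrArg Finset.card ?_
    ext x
    simp only [Finset.mem_filter, Finset.mem_univ, true_and,
      and_iff_right_iff_imp]
    rintro rfl
    exact Function.isPeriodicPt_iff_minimalPeriod_dvd.mpr (Nat.dvd_of_mem_divisors he)
  · intro x hx
    simp only [Finset.coe_filter, Finset.mem_univ, true_and, Set.mem_ofPred_eq] at hx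
    exact Nat.mem_divisors.mpr ⟨Function.IsPeriodicPt.minimalPeriod_dvd hx, hd⟩

lemma addRight_one_pow_eq_one {e p : ℕ} (hep : e ∣ p) :
    (Equiv.addRight (1 : ZMod e)) ^ p = 1 := by
  ext i
  simp [(ZMod.natCast_eq_zero_iff p e).mpr hep]

variable [Fintype α] [DecidableEq α]

lemma sum_card_minimalPeriod_torsionPerm {p e : ℕ} [NeZero e] (hep : e ∣ p) :
    ∑ σ : TorsionPerm p α, Nat.card {x // Function.minimalPeriod σ.1 x = e} =
      (Nat.card α).descFactorial e * torsionPermCount p (Nat.card α - e) := by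
  let Rotates (σ : TorsionPerm p α) (f : ZMod e ↪ α) : Prop := ∀ i, σ.1 (f i) = f (i + 1)
  have hcount (f : ZMod e ↪ α) :
      Nat.card {σ : TorsionPerm p α // Rotates σ f} = torsionPermCount p (Nat.card α - e) :=
    (card_torsionPerm_extending f (addRight_one_pow_eq_one hep)).trans (by rw [Nat.card_zmod])
  calc ∑ σ : TorsionPerm p α, Nat.card {x // Function.minimalPeriod σ.1 x = e}
      = ∑ σ : TorsionPerm p α, Nat.card {f : ZMod e ↪ α // Rotates σ f} :=
        Finset.sum_congr rfl fun σ _ => Nat.card_congr (rotationEmbeddingEquiv σ.1 e).symm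
    _ = ∑ f : ZMod e ↪ α, Nat.card {σ : TorsionPerm p α // Rotates σ f} := by
        classical
        simp only [Nat.card_eq_fintype_card, Fintype.card_subtype]
        exact Finset.sum_card_bipartiteAbove_eq_sum_card_bipartiteBelow Rotates
    _ = (Nat.card α).descFactorial e * torsionPermCount p (Nat.card α - e) := by
        simp only [hcount, Finset.sum_const, Finset.card_univ, Fintype.card_embedding_eq,
          ZMod.card, smul_eq_mul, Nat.card_eq_fintype_card]

theorem sum_card_fixed_pow_torsionPerm {p d : ℕ} (hd : d ≠ 0) (hdp : d ∣ p) :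
    ∑ σ : TorsionPerm p α, Nat.card {x // (σ.1 ^ d) x = x} =
      ∑ e ∈ d.divisors, (Nat.card α).descFactorial e * torsionPermCount p (Nat.card α - e) := by
  simp only [← Equiv.Perm.iterate_eq_pow, card_fixed_iterate _ hd]
  rw [Finset.sum_comm]
  refine Finset.sum_congr rfl fun e he => ?_
  have : NeZero e := ⟨(Nat.pos_of_mem_divisors he).ne'⟩
  exact sum_card_minimalPeriod_torsionPerm ((Nat.dvd_of_mem_divisors he).trans hdp)

end CountingTorsionPerms

section ContourCoefficients

open Metric
open scoped Real

variable {D : Finset ℕ}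

/-- The function `exp (∑_{e ∈ D} z ^ e / e)`, the exponential generating function of the
permutations all of whose cycle lengths lie in `D`. -/
noncomputable def cycleExp (D : Finset ℕ) (z : ℂ) : ℂ := Complex.exp (∑ e ∈ D, z ^ e / e)

/-- `c` is the sequence of Taylor coefficients of `cycleExp D`, encoded by the recurrence that the
differential equation `f' = (∑_{e ∈ D} z ^ (e - 1)) f`, `f 0 = 1` imposes on them. -/
structure IsCycleExpCoeff (D : Finset ℕ) (c : ℕ → ℝ) : Prop where
  zero : c 0 = 1
  natCast_mul (n : ℕ) : n * c n = ∑ e ∈ D with e ≤ n, c (n - e)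

/-- The contour integral that extracts from `cycleExp D` its `n`-th Taylor coefficient, up to the
factor `2πi`. -/
noncomputable def contourCoeff (D : Finset ℕ) (r : ℝ) (n : ℤ) : ℂ :=
  ∮ z in C(0, r), cycleExp D z * z ^ (-n - 1)

lemma differentiable_cycleExp : Differentiable ℂ (cycleExp D) := by
  unfold cycleExp
  fun_prop

lemma cycleExp_zero (hD : 0 ∉ D) : cycleExp D 0 = 1 := by
  rw [cycleExp, Finset.sum_eq_zero, Complex.exp_zero]
  intro e he
  rw [zero_pow (ne_of_mem_of_not_mem he hD), zero_div]

lemma hasDerivAt_cycleExp (hD : 0 ∉ D) (z : ℂ) :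
    HasDerivAt (cycleExp D) (cycleExp D z * ∑ e ∈ D, z ^ (e - 1)) z := by
  refine (HasDerivAt.fun_sum fun e he => ?_).cexp
  have he0 : (e : ℂ) ≠ 0 := Nat.cast_ne_zero.mpr (ne_of_mem_of_not_mem he hD)
  simpa [he0] using (hasDerivAt_pow e z).div_const (e : ℂ)

lemma hasDerivAt_cycleExp_mul_zpow (hD : 0 ∉ D) (n : ℤ) {z : ℂ} (hz : z ≠ 0) :
    HasDerivAt (fun z => cycleExp D z * z ^ (-n))
      (∑ e ∈ D, cycleExp D z * z ^ (-(n - e) - 1) - n * (cycleExp D z * z ^ (-n - 1))) z := by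
  refine ((hasDerivAt_cycleExp hD z).mul (hasDerivAt_zpow (-n) z (.inl hz))).congr_deriv ?_
  have hterm : ∀ e ∈ D, cycleExp D z * z ^ (-(n - e) - 1) =
      cycleExp D z * z ^ (e - 1) * z ^ (-n) := fun e he => by
    have he1 : 1 ≤ e := Nat.one_le_iff_ne_zero.mpr (ne_of_mem_of_not_mem he hD)
    rw [mul_assoc, ← zpow_natCast z (e - 1), ← zpow_add₀ hz, Nat.cast_sub he1]
    congr 2
    push_cast
    ring
  rw [Finset.sum_congr rfl hterm, ← Finset.sum_mul, ← Finset.mul_sum]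
  push_cast
  ring

lemma circleIntegrable_cycleExp_mul_zpow {r : ℝ} (hr : 0 < r) (n : ℤ) :
    CircleIntegrable (fun z => cycleExp D z * z ^ n) 0 r :=
  (differentiable_cycleExp.continuous.continuousOn.mul <|
    continuousOn_id.zpow₀ n fun _ hz => .inl (ne_of_mem_sphere hz hr.ne')).circleIntegrable hr.le

lemma intCast_mul_contourCoeff (hD : 0 ∉ D) {r : ℝ} (hr : 0 < r) (n : ℤ) :
    n * contourCoeff D r n = ∑ e ∈ D, contourCoeff D r (n - e) := by
  have hintegrable := circleIntegrable_cycleExp_mul_zpow (D := D) hr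
  have hintegrable_mul : CircleIntegrable (fun z => (n : ℂ) * (cycleExp D z * z ^ (-n - 1))) 0 r :=
    (hintegrable _).const_smul
  have hclosed := circleIntegral.integral_eq_zero_of_hasDerivWithinAt hr.le fun z hz =>
    (hasDerivAt_cycleExp_mul_zpow hD n (ne_of_mem_sphere hz hr.ne')).hasDerivWithinAt
  rw [circleIntegral.integral_sub (.fun_sum _ fun e _ => hintegrable _) hintegrable_mul,
    circleIntegral.integral_fun_sum fun e _ => hintegrable _,
    circleIntegral.integral_const_mul, sub_eq_zero] at hclosed
  exact hclosed.symm

lemma contourCoeff_of_neg {r : ℝ} (hr : 0 < r) {n : ℤ} (hn : n < 0) : contourCoeff D r n = 0 := by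
  obtain ⟨k, hk⟩ := Int.eq_ofNat_of_zero_le (show 0 ≤ -n - 1 by omega)
  simp only [contourCoeff, hk, zpow_natCast]
  exact (differentiable_cycleExp.mul (differentiable_pow k)).diffContOnCl.circleIntegral_eq_zero
    hr.le

lemma contourCoeff_zero (hD : 0 ∉ D) {r : ℝ} (hr : 0 < r) :
    contourCoeff D r 0 = 2 * π * Complex.I := by
  have hcauchy := (differentiable_cycleExp (D := D)).diffContOnCl.circleIntegral_sub_inv_smul
    (mem_ball_self (x := (0 : ℂ)) hr)
  simpa [contourCoeff, cycleExp_zero hD, mul_comm] using hcauchy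

theorem contourCoeff_natCast {c : ℕ → ℝ} (hc : IsCycleExpCoeff D c) (hD : 0 ∉ D) {r : ℝ}
    (hr : 0 < r) (n : ℕ) : contourCoeff D r n = 2 * π * Complex.I * c n := by
  induction n using Nat.strong_induction_on with
  | _ n ih =>
    rcases eq_or_ne n 0 with rfl | hn
    · simpa [hc.zero] using contourCoeff_zero hD hr
    refine mul_left_cancel₀ (Nat.cast_ne_zero.mpr hn) ?_
    calc (n : ℂ) * contourCoeff D r n
        = ∑ e ∈ D, contourCoeff D r (n - e) := mod_cast intCast_mul_contourCoeff hD hr n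
      _ = ∑ e ∈ D with e ≤ n, contourCoeff D r (n - e) :=
        (Finset.sum_filter_of_ne fun e _ hne => by
          contrapose! hne
          exact contourCoeff_of_neg hr (by omega)).symm
      _ = ∑ e ∈ D with e ≤ n, 2 * π * Complex.I * c (n - e) :=
        Finset.sum_congr rfl fun e he => by
          obtain ⟨heD, hen⟩ := Finset.mem_filter.mp he
          have he0 : e ≠ 0 := ne_of_mem_of_not_mem heD hD
          rw [← ih (n - e) (by omega), Nat.cast_sub hen]
      _ = n * (2 * π * Complex.I * c n) := by
        rw [← Finset.mul_sum, mul_left_comm, ← Complex.ofReal_natCast n, ← Complex.ofReal_mul,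
          hc.natCast_mul n, Complex.ofReal_sum]

end ContourCoefficients

section SaddlePointIntegrand

open Complex (I)
open scoped Real

variable {D : Finset ℕ}

/-- What remains of the integrand of `contourCoeff D r (n - j)` at `r * exp (θ * I)` after its value
at `θ = 0` is factored out, when `r` is the saddle point given by `∑_{e ∈ D} r ^ e = n`. -/
noncomputable def saddleIntegrand (D : Finset ℕ) (j : ℕ) (r θ : ℝ) : ℂ :=
  Complex.exp (∑ e ∈ D, (r ^ e / e : ℝ) * (Complex.exp (e * θ * I) - 1 - e * θ * I) + j * θ * I)

lemma continuous_saddleIntegrand (j : ℕ) (r : ℝ) : Continuous (saddleIntegrand D j r) := by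
  unfold saddleIntegrand
  fun_prop

lemma contourCoeff_eq_integral {r : ℝ} (hr : 0 < r) (n : ℤ) :
    contourCoeff D r n =
      I * ∫ θ in -π..π, cycleExp D (circleMap 0 r θ) * circleMap 0 r θ ^ (-n) := by
  have hper : Function.Periodic
      (fun θ => cycleExp D (circleMap 0 r θ) * circleMap 0 r θ ^ (-n)) (2 * π) := fun θ => by
    simp only [periodic_circleMap 0 r θ]
  have hshift := hper.intervalIntegral_add_eq 0 (-π)
  rw [zero_add, show -π + 2 * π = π by ring] at hshift
  rw [contourCoeff, circleIntegral_def_Icc, MeasureTheory.integral_Icc_eq_integral_Ioc,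
    ← intervalIntegral.integral_of_le Real.two_pi_pos.le, ← hshift,
    ← intervalIntegral.integral_const_mul]
  refine intervalIntegral.integral_congr fun θ _ => ?_
  rw [deriv_circleMap, smul_eq_mul, zpow_sub_one₀ (circleMap_ne_center hr.ne')]
  field_simp [circleMap_ne_center hr.ne' (c := 0) (θ := θ)]

lemma cycleExp_circleMap_mul_zpow (hD : 0 ∉ D) {r : ℝ} {n : ℤ} (hn : ∑ e ∈ D, r ^ e = n) (j : ℕ)
    (θ : ℝ) : cycleExp D (circleMap 0 r θ) * circleMap 0 r θ ^ (-(n - j)) =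
      cycleExp D r * (r : ℂ) ^ (-(n - j)) * saddleIntegrand D j r θ := by
  have hn' : (n : ℂ) = ∑ e ∈ D, (r : ℂ) ^ e := mod_cast congrArg ((↑) : ℝ → ℂ) hn.symm
  have hexponent : ∑ e ∈ D, ((r : ℂ) * Complex.exp (θ * I)) ^ e / e + -(n - j) * (θ * I) =
      ∑ e ∈ D, (r : ℂ) ^ e / e +
        (∑ e ∈ D, (r ^ e / e : ℝ) * (Complex.exp (e * θ * I) - 1 - e * θ * I) + j * θ * I) := by
    have hterm : ∀ e ∈ D, (r : ℂ) ^ e / e +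
        (r ^ e / e : ℝ) * (Complex.exp (e * θ * I) - 1 - e * θ * I) =
          ((r : ℂ) * Complex.exp (θ * I)) ^ e / e - (r : ℂ) ^ e * (θ * I) := fun e he => by
      have he0 : (e : ℂ) ≠ 0 := Nat.cast_ne_zero.mpr (ne_of_mem_of_not_mem he hD)
      rw [mul_pow, ← Complex.exp_nat_mul, ← mul_assoc (e : ℂ)]
      push_cast
      field_simp
      ring
    rw [hn', ← add_assoc, ← Finset.sum_add_distrib, Finset.sum_congr rfl hterm,
      Finset.sum_sub_distrib, ← Finset.sum_mul]
    ring
  simp only [cycleExp, saddleIntegrand, circleMap_zero, mul_zpow, ← Complex.exp_int_mul]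
  rw [mul_left_comm, ← Complex.exp_add, mul_right_comm, ← Complex.exp_add, mul_comm, ← hexponent]
  push_cast
  rfl

lemma contourCoeff_eq_mul_integral_saddleIntegrand (hD : 0 ∉ D) {r : ℝ} (hr : 0 < r) {n : ℤ}
    (hn : ∑ e ∈ D, r ^ e = n) (j : ℕ) :
    contourCoeff D r (n - j) =
      I * (cycleExp D r * (r : ℂ) ^ (-(n - j)) * ∫ θ in -π..π, saddleIntegrand D j r θ) := by
  rw [contourCoeff_eq_integral hr]
  simp only [cycleExp_circleMap_mul_zpow hD hn, intervalIntegral.integral_const_mul]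

lemma norm_saddleIntegrand (j : ℕ) (r θ : ℝ) :
    ‖saddleIntegrand D j r θ‖ = Real.exp (∑ e ∈ D, r ^ e / e * (Real.cos (e * θ) - 1)) := by
  rw [saddleIntegrand, Complex.norm_exp, Complex.add_re, Complex.re_sum,
    ← Complex.ofReal_natCast j, ← Complex.ofReal_mul, Complex.re_ofReal_mul, Complex.I_re,
    mul_zero, add_zero]
  refine congrArg _ (Finset.sum_congr rfl fun e _ => ?_)
  rw [Complex.re_ofReal_mul, ← Complex.ofReal_natCast e, ← Complex.ofReal_mul, Complex.sub_re,
    Complex.sub_re, Complex.exp_ofReal_mul_I_re, Complex.re_ofReal_mul, Complex.I_re]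
  simp

lemma norm_saddleIntegrand_le {e : ℕ} (he : e ∈ D) (j : ℕ) {r θ : ℝ} (hr : 0 ≤ r)
    (hθ : |e * θ| ≤ π) :
    ‖saddleIntegrand D j r θ‖ ≤ Real.exp (-(2 * e / π ^ 2 * (r ^ e * θ ^ 2))) := by
  have hterm_nonpos (k : ℕ) : r ^ k / k * (Real.cos (k * θ) - 1) ≤ 0 :=
    mul_nonpos_of_nonneg_of_nonpos (by positivity) (by linarith [Real.cos_le_one (k * θ)])
  have hcos := Real.cos_le_one_sub_mul_cos_sq hθ
  rw [norm_saddleIntegrand, Real.exp_le_exp]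
  calc ∑ k ∈ D, r ^ k / k * (Real.cos (k * θ) - 1)
      ≤ r ^ e / e * (Real.cos (e * θ) - 1) := by
        rw [← Finset.add_sum_erase D _ he]
        exact add_le_of_nonpos_right (Finset.sum_nonpos fun k _ => hterm_nonpos k)
    _ ≤ r ^ e / e * (-(2 / π ^ 2 * (e * θ) ^ 2)) := by gcongr; linarith
    _ = -(2 * e / π ^ 2 * (r ^ e * θ ^ 2)) := by
        rcases eq_or_ne (e : ℝ) 0 with h0 | h0
        · simp [h0]
        · field_simp

lemma exp_neg_mul_mul_pow_le {b x : ℝ} (hb : 0 < b) (hx : 0 ≤ x) (k : ℕ) :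
    Real.exp (-(b * x)) * x ^ k ≤ k.factorial / b ^ k := by
  have hexp := Real.pow_div_factorial_le_exp (b * x) (by positivity) k
  rw [div_le_iff₀ (by positivity), mul_pow] at hexp
  rw [Real.exp_neg, inv_mul_le_iff₀ (Real.exp_pos _), mul_div_assoc', le_div_iff₀ (by positivity)]
  linarith

variable {p : ℕ}

lemma norm_saddleIntegrand_le_of_near (hp : p ∈ D) (hp0 : p ≠ 0) (j : ℕ) {r t : ℝ} (hr : 0 < r)
    (ht : |p * (t / √(r ^ p))| ≤ π) :
    ‖saddleIntegrand D j r (t / √(r ^ p))‖ ≤ (1 + π ^ 2 / (2 * p)) * (1 + t ^ 2)⁻¹ := by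
  have hbound := norm_saddleIntegrand_le hp j hr.le ht
  rw [div_pow, Real.sq_sqrt (by positivity), mul_div_cancel₀ _ (by positivity)] at hbound
  rw [← div_eq_mul_inv, le_div_iff₀ (by positivity)]
  set b : ℝ := 2 * p / π ^ 2 with hb
  calc ‖saddleIntegrand D j r (t / √(r ^ p))‖ * (1 + t ^ 2)
      ≤ Real.exp (-(b * t ^ 2)) * (1 + t ^ 2) := by gcongr
    _ = Real.exp (-(b * t ^ 2)) * (t ^ 2) ^ 0 + Real.exp (-(b * t ^ 2)) * (t ^ 2) ^ 1 := by ring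
    _ ≤ Nat.factorial 0 / b ^ 0 + Nat.factorial 1 / b ^ 1 := by
        gcongr <;> exact exp_neg_mul_mul_pow_le (by positivity) (by positivity) _
    _ = 1 + π ^ 2 / (2 * p) := by simp [hb]

-- For `|p * θ| > π` the term `e = p` may vanish, as it does at `θ = 2π / p`; the term `e = 1` still
-- gives decay like `exp (-c * r)`, which beats every power of `r`.
lemma norm_saddleIntegrand_le_of_far (h1 : 1 ∈ D) (hp0 : p ≠ 0) (j : ℕ) {r t : ℝ} (hr : 1 ≤ r)
    (ht : |t| ≤ π * √(r ^ p)) (hfar : π < |p * (t / √(r ^ p))|) :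
    ‖saddleIntegrand D j r (t / √(r ^ p))‖ ≤
      p.factorial / (2 / (p : ℝ) ^ 2) ^ p * (1 + π ^ 2) * (1 + t ^ 2)⁻¹ := by
  have hs : 0 < √(r ^ p) := Real.sqrt_pos.mpr (by positivity)
  set θ := t / √(r ^ p) with hθ
  have hθ_le : |((1 : ℕ) : ℝ) * θ| ≤ π := by
    rwa [Nat.cast_one, one_mul, hθ, abs_div, abs_of_pos hs, div_le_iff₀ hs]
  have hθ_ge : (π / p) ^ 2 ≤ θ ^ 2 := by
    rw [sq_le_sq, abs_of_pos (by positivity), div_le_iff₀ (by positivity)]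
    rw [abs_mul, Nat.abs_cast] at hfar
    linarith
  have ht_sq : 1 + t ^ 2 ≤ r ^ p * (1 + π ^ 2) := by
    have := sq_le_sq' (neg_le_of_abs_le ht) (le_of_abs_le ht)
    rw [mul_pow, Real.sq_sqrt (by positivity)] at this
    linarith [one_le_pow₀ hr (n := p)]
  rw [← div_eq_mul_inv, le_div_iff₀ (by positivity)]
  calc ‖saddleIntegrand D j r θ‖ * (1 + t ^ 2)
      ≤ Real.exp (-(2 / (p : ℝ) ^ 2 * r)) * (r ^ p * (1 + π ^ 2)) := by
        gcongr
        refine (norm_saddleIntegrand_le h1 j (by positivity) hθ_le).trans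
          (Real.exp_le_exp.mpr (neg_le_neg ?_))
        calc 2 / (p : ℝ) ^ 2 * r = 2 * (1 : ℕ) / π ^ 2 * (r ^ 1 * (π / p) ^ 2) := by
              field_simp
              simp
          _ ≤ 2 * (1 : ℕ) / π ^ 2 * (r ^ 1 * θ ^ 2) := by gcongr
    _ = Real.exp (-(2 / (p : ℝ) ^ 2 * r)) * r ^ p * (1 + π ^ 2) := by ring
    _ ≤ p.factorial / (2 / (p : ℝ) ^ 2) ^ p * (1 + π ^ 2) := by
        gcongr
        exact exp_neg_mul_mul_pow_le (by positivity) (by positivity) p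

lemma exists_norm_saddleIntegrand_le (h1 : 1 ∈ D) (hp : p ∈ D) (hp0 : p ≠ 0) (j : ℕ) :
    ∃ C : ℝ, 0 ≤ C ∧ ∀ r : ℝ, 1 ≤ r → ∀ t : ℝ, |t| ≤ π * √(r ^ p) →
      ‖saddleIntegrand D j r (t / √(r ^ p))‖ ≤ C * (1 + t ^ 2)⁻¹ := by
  refine ⟨max (1 + π ^ 2 / (2 * p)) (p.factorial / (2 / (p : ℝ) ^ 2) ^ p * (1 + π ^ 2)),
    le_max_of_le_left (by positivity), fun r hr t ht => ?_⟩
  rcases le_or_gt |p * (t / √(r ^ p))| π with hnear | hfar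
  · refine (norm_saddleIntegrand_le_of_near hp hp0 j (by positivity) hnear).trans ?_
    gcongr
    exact le_max_left _ _
  · refine (norm_saddleIntegrand_le_of_far h1 hp0 j hr ht hfar).trans ?_
    gcongr
    exact le_max_right _ _

end SaddlePointIntegrand

section SaddlePointLimit

open Complex (I)
open scoped Real
open MeasureTheory

lemma tendsto_mul_exp_sub_one_sub {ι : Type*} {l : Filter ι} {a x : ι → ℂ} {L : ℂ}
    (hx : Tendsto x l (𝓝 0)) (hax : Tendsto (fun i => a i * x i ^ 2) l (𝓝 L)) :
    Tendsto (fun i => a i * (Complex.exp (x i) - 1 - x i)) l (𝓝 (L / 2)) := by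
  have htaylor : (fun i => Complex.exp (x i) - 1 - x i - x i ^ 2 / 2) =o[l] fun i => x i ^ 2 := by
    refine ((Complex.exp_sub_sum_range_succ_isLittleO_pow 2).comp_tendsto hx).congr_left fun i => ?_
    simp only [Function.comp_apply, Finset.sum_range_succ, Finset.sum_range_zero, Nat.factorial]
    push_cast
    ring
  have hrem : Tendsto (fun i => a i * (Complex.exp (x i) - 1 - x i - x i ^ 2 / 2)) l (𝓝 0) :=
    (isLittleO_one_iff ℂ).mp <|
      ((isBigO_refl a l).mul_isLittleO htaylor).trans_isBigO (hax.isBigO_one ℂ)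
  have hsum := (hax.div_const 2).add hrem
  rw [add_zero] at hsum
  exact hsum.congr fun i => by ring

lemma tendsto_pow_div_pow_atTop_ite {e p : ℕ} (hep : e ≤ p) :
    Tendsto (fun r : ℝ => r ^ e / r ^ p) atTop (𝓝 (if e = p then 1 else 0)) := by
  split_ifs with h
  · subst h
    refine tendsto_const_nhds.congr' ?_
    filter_upwards [eventually_ne_atTop 0] with r hr
    rw [div_self (pow_ne_zero e hr)]
  · exact tendsto_pow_div_pow_atTop_zero (lt_of_le_of_ne hep h)

lemma tendsto_sqrt_pow_atTop {p : ℕ} (hp0 : p ≠ 0) :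
    Tendsto (fun r : ℝ => √(r ^ p)) atTop atTop :=
  Real.tendsto_sqrt_atTop.comp (tendsto_pow_atTop hp0)

variable {D : Finset ℕ} {p : ℕ}

lemma tendsto_saddleIntegrand (hp : IsGreatest (D : Set ℕ) p) (hp0 : p ≠ 0) (j : ℕ) (t : ℝ) :
    Tendsto (fun r : ℝ => saddleIntegrand D j r (t / √(r ^ p))) atTop
      (𝓝 (Real.exp (-(p / 2) * t ^ 2) : ℝ)) := by
  have hθ : Tendsto (fun r : ℝ => ((t / √(r ^ p) : ℝ) : ℂ)) atTop (𝓝 0) := by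
    exact_mod_cast (Complex.continuous_ofReal.tendsto 0).comp
      ((tendsto_sqrt_pow_atTop hp0).const_div_atTop t)
  have hlin (e : ℕ) : Tendsto (fun r : ℝ => e * ((t / √(r ^ p) : ℝ) : ℂ) * I) atTop (𝓝 0) := by
    simpa using (hθ.const_mul (e : ℂ)).mul_const I
  have hterm : ∀ e ∈ D, Tendsto (fun r : ℝ => ((r ^ e / e : ℝ) : ℂ) *
      (Complex.exp (e * ((t / √(r ^ p) : ℝ) : ℂ) * I) - 1 - e * ((t / √(r ^ p) : ℝ) : ℂ) * I)) atTop
      (𝓝 (((-(e * t ^ 2) * if e = p then 1 else 0 : ℝ) : ℂ) / 2)) := fun e he => by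
    refine tendsto_mul_exp_sub_one_sub (hlin e) ?_
    have hquad := (tendsto_pow_div_pow_atTop_ite (hp.2 he)).const_mul (-(e * t ^ 2 : ℝ))
    refine ((Complex.continuous_ofReal.tendsto _).comp hquad).congr' ?_
    filter_upwards [eventually_gt_atTop 0] with r hr
    have hsq : ((√(r ^ p) : ℝ) : ℂ) ^ 2 = (r : ℂ) ^ p := mod_cast Real.sq_sqrt (by positivity)
    simp only [Function.comp_apply, mul_pow, Complex.I_sq]
    push_cast
    rw [div_pow, hsq]
    field_simp
  have hexp := (tendsto_finsetSum D hterm).add (hlin j)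
  have hlimit : ∑ e ∈ D, ((-(e * t ^ 2) * if e = p then 1 else 0 : ℝ) : ℂ) / 2 + 0 =
      ((-(p / 2) * t ^ 2 : ℝ) : ℂ) := by
    rw [Finset.sum_eq_single_of_mem p hp.1 fun e _ hne => by simp [hne]]
    rw [if_pos rfl]
    push_cast
    ring
  rw [Complex.ofReal_exp, ← hlimit]
  exact (Complex.continuous_exp.tendsto _).comp hexp

lemma tendsto_sqrt_mul_integral_saddleIntegrand (h1 : 1 ∈ D) (hp : IsGreatest (D : Set ℕ) p)
    (hp0 : p ≠ 0) (j : ℕ) :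
    Tendsto (fun r : ℝ => (√(r ^ p) : ℂ) * ∫ θ in -π..π, saddleIntegrand D j r θ) atTop
      (𝓝 (√(π / (p / 2)) : ℝ)) := by
  let F (r t : ℝ) : ℂ := (Set.Ioc (-π * √(r ^ p)) (π * √(r ^ p))).indicator
    (fun t => saddleIntegrand D j r (t / √(r ^ p))) t
  have hF_integral : ∀ᶠ r in atTop, ∫ t, F r t =
      (√(r ^ p) : ℂ) * ∫ θ in -π..π, saddleIntegrand D j r θ := by
    filter_upwards [eventually_gt_atTop 0] with r hr
    have hs : 0 < √(r ^ p) := Real.sqrt_pos.mpr (by positivity)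
    rw [integral_indicator measurableSet_Ioc, ← intervalIntegral.integral_of_le
      (by nlinarith [Real.pi_pos]), intervalIntegral.integral_comp_div _ hs.ne',
      mul_div_cancel_right₀ _ hs.ne', mul_div_cancel_right₀ _ hs.ne', Complex.real_smul]
  rw [← integral_gaussian, ← integral_complex_ofReal]
  refine Tendsto.congr' hF_integral ?_
  obtain ⟨C, hC0, hC⟩ := exists_norm_saddleIntegrand_le h1 hp.1 hp0 j
  refine tendsto_integral_filter_of_dominated_convergence (fun t => C * (1 + t ^ 2)⁻¹)
    (.of_forall fun r => ?_) ?_ (integrable_inv_one_add_sq.const_mul C) (.of_forall fun t => ?_)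
  · exact ((continuous_saddleIntegrand j r).comp
      (continuous_id.div_const _)).aestronglyMeasurable.indicator measurableSet_Ioc
  · filter_upwards [eventually_ge_atTop 1] with r hr
    refine .of_forall fun t => ?_
    by_cases ht : t ∈ Set.Ioc (-π * √(r ^ p)) (π * √(r ^ p))
    · simpa only [F, Set.indicator_of_mem ht] using
        hC r hr t (abs_le.mpr ⟨by linarith [ht.1], ht.2⟩)
    · simp only [F, Set.indicator_of_notMem ht, norm_zero]
      positivity
  · refine (tendsto_saddleIntegrand hp hp0 j t).congr' ?_
    filter_upwards [((tendsto_sqrt_pow_atTop hp0).const_mul_atTop Real.pi_pos).eventually_gt_atTop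
      |t|] with r hr
    have ht : t ∈ Set.Ioc (-π * √(r ^ p)) (π * √(r ^ p)) :=
      ⟨by linarith [(abs_lt.mp hr).1], (abs_lt.mp hr).2.le⟩
    simp only [F, Set.indicator_of_mem ht]

end SaddlePointLimit

section CoefficientRatio

open scoped Real

variable {D : Finset ℕ}

lemma exists_sum_pow_eq (hD : 0 ∉ D) (hne : D.Nonempty) {x : ℝ} (hx : 0 ≤ x) :
    ∃ r : ℝ, 0 ≤ r ∧ ∑ e ∈ D, r ^ e = x := by
  obtain ⟨k, hk⟩ := hne
  have hzero : ∑ e ∈ D, (0 : ℝ) ^ e = 0 :=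
    Finset.sum_eq_zero fun e he => zero_pow (ne_of_mem_of_not_mem he hD)
  have hlarge : x ≤ ∑ e ∈ D, (x + 1) ^ e :=
    calc x ≤ x + 1 := by linarith
      _ ≤ (x + 1) ^ k := le_self_pow₀ (by linarith) (ne_of_mem_of_not_mem hk hD)
      _ ≤ ∑ e ∈ D, (x + 1) ^ e :=
        Finset.single_le_sum (f := fun e => (x + 1) ^ e) (fun e _ => by positivity) hk
  have hcont : Continuous fun r : ℝ => ∑ e ∈ D, r ^ e := by fun_prop
  obtain ⟨r, hr, hrx⟩ := intermediate_value_Icc (a := 0) (b := x + 1) (by linarith)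
    hcont.continuousOn ⟨hzero.trans_le hx, hlarge⟩
  exact ⟨r, hr.1, hrx⟩

variable {r : ℕ → ℝ}

lemma tendsto_atTop_of_sum_pow_eq (hr0 : ∀ n, 0 ≤ r n) (hr : ∀ n, ∑ e ∈ D, r n ^ e = n) :
    Tendsto r atTop atTop := by
  rw [tendsto_atTop]
  intro M
  filter_upwards [tendsto_natCast_atTop_atTop.eventually_gt_atTop (∑ e ∈ D, M ^ e)] with n hn
  contrapose! hn
  rw [← hr n]
  exact Finset.sum_le_sum fun e _ => pow_le_pow_left₀ (hr0 n) hn.le e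

lemma tendsto_pow_div_of_sum_pow_eq {p : ℕ} (hp : IsGreatest (D : Set ℕ) p) (hr0 : ∀ n, 0 ≤ r n)
    (hr : ∀ n, ∑ e ∈ D, r n ^ e = n) : Tendsto (fun n => r n ^ p / n) atTop (𝓝 1) := by
  have hsum : Tendsto (fun x : ℝ => ∑ e ∈ D, x ^ e / x ^ p) atTop (𝓝 1) := by
    have hlimit : ∑ e ∈ D, (if e = p then 1 else 0 : ℝ) = 1 := by
      rw [Finset.sum_ite_eq', if_pos (Finset.mem_coe.mp hp.1)]
    exact hlimit ▸ tendsto_finsetSum D fun e he => tendsto_pow_div_pow_atTop_ite (hp.2 he)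
  have hinv := (hsum.comp (tendsto_atTop_of_sum_pow_eq hr0 hr)).inv₀ one_ne_zero
  rw [inv_one] at hinv
  refine hinv.congr fun n => ?_
  rw [Function.comp_apply, ← Finset.sum_div, hr n, inv_div]

lemma tendsto_pow_div_rpow_of_sum_pow_eq {p : ℕ} (hp : IsGreatest (D : Set ℕ) p) (hp0 : p ≠ 0)
    (hr0 : ∀ n, 0 ≤ r n) (hr : ∀ n, ∑ e ∈ D, r n ^ e = n) (j : ℕ) :
    Tendsto (fun n : ℕ => r n ^ j / (n : ℝ) ^ ((j : ℝ) / p)) atTop (𝓝 1) := by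
  have hpow := (tendsto_pow_div_of_sum_pow_eq hp hr0 hr).rpow_const (p := (j : ℝ) / p)
    (.inl one_ne_zero)
  rw [Real.one_rpow] at hpow
  refine hpow.congr fun n => ?_
  rw [Real.div_rpow (pow_nonneg (hr0 n) _) n.cast_nonneg, ← Real.rpow_natCast,
    ← Real.rpow_mul (hr0 n), mul_div_cancel₀ _ (Nat.cast_ne_zero.mpr hp0), Real.rpow_natCast]

namespace IsCycleExpCoeff

variable {c : ℕ → ℝ}

lemma integral_saddleIntegrand_eq (hc : IsCycleExpCoeff D c) (hD : 0 ∉ D) {n j : ℕ} (hjn : j ≤ n)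
    {r : ℝ} (hr : 0 < r) (hrn : ∑ e ∈ D, r ^ e = n) :
    ∫ θ in -π..π, saddleIntegrand D j r θ =
      2 * π * r ^ n / cycleExp D r * (c (n - j) / r ^ j : ℝ) := by
  have hcontour :=
    contourCoeff_eq_mul_integral_saddleIntegrand hD hr (n := n) (mod_cast hrn) j
  rw [← Nat.cast_sub hjn, contourCoeff_natCast hc hD hr, zpow_neg, zpow_natCast] at hcontour
  have hr' : (r : ℂ) ≠ 0 := Complex.ofReal_ne_zero.mpr hr.ne'
  have hexp : cycleExp D r ≠ 0 := Complex.exp_ne_zero _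
  have hI := Complex.I_ne_zero
  rw [← pow_sub_mul_pow (r : ℂ) hjn]
  push_cast
  field_simp at hcontour ⊢
  linear_combination -hcontour

lemma div_div_pow_eq_integral_div (hc : IsCycleExpCoeff D c) (hD : 0 ∉ D) {n j : ℕ} (hjn : j ≤ n)
    {r : ℝ} (hr : 0 < r) (hrn : ∑ e ∈ D, r ^ e = n) :
    ((c (n - j) / c n / r ^ j : ℝ) : ℂ) =
      (∫ θ in -π..π, saddleIntegrand D j r θ) / ∫ θ in -π..π, saddleIntegrand D 0 r θ := by
  have hfactor : 2 * π * (r : ℂ) ^ n / cycleExp D r ≠ 0 :=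
    div_ne_zero (mul_ne_zero (mod_cast Real.two_pi_pos.ne')
      (pow_ne_zero n (Complex.ofReal_ne_zero.mpr hr.ne'))) (Complex.exp_ne_zero _)
  rw [hc.integral_saddleIntegrand_eq hD hjn hr hrn,
    hc.integral_saddleIntegrand_eq hD n.zero_le hr hrn, mul_div_mul_left _ _ hfactor,
    pow_zero, div_one, Nat.sub_zero, div_right_comm, Complex.ofReal_div]

theorem tendsto_div_div_rpow (hc : IsCycleExpCoeff D c) (hD : 0 ∉ D) (h1 : 1 ∈ D) {p : ℕ}
    (hp : IsGreatest (D : Set ℕ) p) (j : ℕ) :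
    Tendsto (fun n : ℕ => c (n - j) / c n / (n : ℝ) ^ ((j : ℝ) / p)) atTop (𝓝 1) := by
  have hp0 : p ≠ 0 := ne_of_mem_of_not_mem hp.1 hD
  choose r hr0 hr using fun n : ℕ => exists_sum_pow_eq hD ⟨1, h1⟩ n.cast_nonneg
  have hr_atTop := tendsto_atTop_of_sum_pow_eq hr0 hr
  have hgauss : ((√(π / (p / 2)) : ℝ) : ℂ) ≠ 0 :=
    Complex.ofReal_ne_zero.mpr (Real.sqrt_pos.mpr (by positivity)).ne'
  have hintegral (k : ℕ) := (tendsto_sqrt_mul_integral_saddleIntegrand h1 hp hp0 k).comp hr_atTop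
  have hratio : Tendsto (fun n => ((c (n - j) / c n / r n ^ j : ℝ) : ℂ)) atTop (𝓝 (1 : ℝ)) := by
    have hdiv := (hintegral j).div (hintegral 0) hgauss
    rw [div_self hgauss, ← Complex.ofReal_one] at hdiv
    refine hdiv.congr' ?_
    filter_upwards [hr_atTop.eventually_gt_atTop 0, eventually_ge_atTop j] with n hn hj
    have hs : ((√(r n ^ p) : ℝ) : ℂ) ≠ 0 :=
      Complex.ofReal_ne_zero.mpr (Real.sqrt_pos.mpr (by positivity)).ne'
    rw [hc.div_div_pow_eq_integral_div hD hj hn (hr n)]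
    exact mul_div_mul_left _ _ hs
  have hmul := (tendsto_ofReal_iff.mp hratio).mul
    (tendsto_pow_div_rpow_of_sum_pow_eq hp hp0 hr0 hr j)
  rw [mul_one] at hmul
  refine hmul.congr' ?_
  filter_upwards [hr_atTop.eventually_gt_atTop 0] with n hn
  exact div_mul_div_cancel₀ (pow_pos hn j).ne'

end IsCycleExpCoeff

end CoefficientRatio

section FixedPointsOfTorsionPerms

variable {p d : ℕ}

lemma cast_descFactorial_mul_torsionPermCount (p : ℕ) {n e : ℕ} (hen : e ≤ n) :
    ((n.descFactorial e * torsionPermCount p (n - e) : ℕ) : ℝ) =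
      n.factorial * (torsionPermCount p (n - e) / (n - e).factorial) := by
  have hfact : ((n - e).factorial : ℝ) ≠ 0 := Nat.cast_ne_zero.mpr (n - e).factorial_ne_zero
  rw [← Nat.factorial_mul_descFactorial hen]
  push_cast
  field_simp

lemma isCycleExpCoeff_torsionPermCount (hp : p ≠ 0) :
    IsCycleExpCoeff p.divisors fun n => torsionPermCount p n / n.factorial where
  zero := by
    have : Nonempty (TorsionPerm p (Fin 0)) := ⟨⟨1, one_pow p⟩⟩
    have hcard : torsionPermCount p 0 = 1 := Nat.card_unique
    simp [hcard]
  natCast_mul n := by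
    have hfact : (n.factorial : ℝ) ≠ 0 := Nat.cast_ne_zero.mpr n.factorial_ne_zero
    have hcount : torsionPermCount p n * n =
        ∑ e ∈ p.divisors, n.descFactorial e * torsionPermCount p (n - e) := by
      have hfix (σ : TorsionPerm p (Fin n)) : Nat.card {x // (σ.1 ^ p) x = x} = n := by simp [σ.2]
      have h := sum_card_fixed_pow_torsionPerm (α := Fin n) hp dvd_rfl
      rw [Nat.card_fin] at h
      rw [← h, Finset.sum_congr rfl fun σ _ => hfix σ, Finset.sum_const, Finset.card_univ,
        smul_eq_mul, torsionPermCount, Nat.card_eq_fintype_card]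
    have hvanish : ∀ e ∈ p.divisors, n.descFactorial e * torsionPermCount p (n - e) ≠ 0 → e ≤ n :=
      fun e _ hne => not_lt.mp fun hlt => hne (by rw [Nat.descFactorial_of_lt hlt, zero_mul])
    refine mul_left_cancel₀ hfact ?_
    calc (n.factorial : ℝ) * (n * (torsionPermCount p n / n.factorial))
        = ((torsionPermCount p n * n : ℕ) : ℝ) := by
          push_cast
          field_simp
      _ = ∑ e ∈ p.divisors with e ≤ n, ((n.descFactorial e * torsionPermCount p (n - e) : ℕ) : ℝ) :=
        by rw [hcount, ← Finset.sum_filter_of_ne hvanish, Nat.cast_sum]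
      _ = n.factorial * ∑ e ∈ p.divisors with e ≤ n,
            (torsionPermCount p (n - e) / (n - e).factorial : ℝ) := by
          rw [Finset.mul_sum]
          exact Finset.sum_congr rfl fun e he =>
            cast_descFactorial_mul_torsionPermCount p (Finset.mem_filter.mp he).2

lemma sum_card_fixed_div_torsionPermCount (hd : d ≠ 0) (hdp : d ∣ p) {n : ℕ} (hdn : d ≤ n) :
    (∑ σ : TorsionPerm p (Fin n), (Nat.card {x // (σ.1 ^ d) x = x} : ℝ)) / torsionPermCount p n =
      ∑ e ∈ d.divisors, (torsionPermCount p (n - e) / (n - e).factorial : ℝ) /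
        (torsionPermCount p n / n.factorial) := by
  rw [← Nat.cast_sum, sum_card_fixed_pow_torsionPerm hd hdp, Nat.card_fin, Nat.cast_sum,
    Finset.sum_div]
  refine Finset.sum_congr rfl fun e he => ?_
  rw [cast_descFactorial_mul_torsionPermCount p ((Nat.divisor_le he).trans hdn), div_div_eq_mul_div,
    mul_comm]

theorem tendsto_sum_card_fixed_div_rpow (hp : p ≠ 0) (hdp : d ∣ p) :
    Tendsto (fun n : ℕ =>
      (∑ σ : TorsionPerm p (Fin n), (Nat.card {x // (σ.1 ^ d) x = x} : ℝ)) / torsionPermCount p n /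
        (n : ℝ) ^ ((d : ℝ) / p)) atTop (𝓝 1) := by
  have hd : d ≠ 0 := ne_zero_of_dvd_ne_zero hp hdp
  let c (n : ℕ) : ℝ := torsionPermCount p n / n.factorial
  have hratio (e : ℕ) : Tendsto (fun n => c (n - e) / c n / (n : ℝ) ^ ((e : ℝ) / p)) atTop (𝓝 1) :=
    (isCycleExpCoeff_torsionPermCount hp).tendsto_div_div_rpow (by simp) (by simpa using hp)
      ⟨by simpa using hp, fun e he => Nat.divisor_le he⟩ e
  have hterm : ∀ e ∈ d.divisors, Tendsto (fun n => c (n - e) / c n / (n : ℝ) ^ ((d : ℝ) / p)) atTop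
      (𝓝 (if e = d then 1 else 0)) := fun e he => by
    split_ifs with hed
    · exact hed ▸ hratio e
    have hexp : 0 < (d : ℝ) / p - e / p := by
      rw [← sub_div]
      have : (e : ℝ) < d := mod_cast lt_of_le_of_ne (Nat.divisor_le he) hed
      exact div_pos (by linarith) (by positivity)
    have hsmall := (hratio e).mul
      ((tendsto_rpow_neg_atTop hexp).comp tendsto_natCast_atTop_atTop)
    rw [mul_zero] at hsmall
    refine hsmall.congr' ?_
    filter_upwards [eventually_gt_atTop 0] with n hn
    have hn' : (0 : ℝ) < n := mod_cast hn
    rw [Function.comp_apply, neg_sub, Real.rpow_sub hn']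
    exact div_mul_div_cancel₀ (Real.rpow_pos_of_pos hn' _).ne'
  have hsum := tendsto_finsetSum d.divisors hterm
  rw [Finset.sum_ite_eq', if_pos (Nat.mem_divisors_self d hd)] at hsum
  refine hsum.congr' ?_
  filter_upwards [eventually_ge_atTop d] with n hn
  rw [sum_card_fixed_div_torsionPermCount hd hdp hn, Finset.sum_div]

end FixedPointsOfTorsionPerms

section ExpectedFixedPoints

variable {m : ℕ} {p : Fin m → ℕ}

lemma homExp_generator (i : Fin m) (n : ℕ) (f : TorsionPerm (p i) (Fin n) → ℝ) :
    homExp (CyclicFreeProduct m p) n (fun φ => f (cyclicFreeProductHomEquiv p _ φ i)) =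
      (∑ σ, f σ) / torsionPermCount (p i) n := by
  let E := (cyclicFreeProductHomEquiv p (Equiv.Perm (Fin n))).trans (Equiv.piSplitAt i _)
  let Others := ∀ j : {j // j ≠ i}, TorsionPerm (p j) (Fin n)
  have : Nonempty Others := ⟨fun j => ⟨1, one_pow _⟩⟩
  have hcard : (Nat.card Others : ℝ) ≠ 0 := Nat.cast_ne_zero.mpr Nat.card_pos.ne'
  have hsum : ∑' φ, f (cyclicFreeProductHomEquiv p _ φ i) = Nat.card Others * ∑ σ, f σ := by
    rw [← E.symm.tsum_eq, tsum_fintype, Fintype.sum_prod_type]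
    have hE (σ) (τ : Others) : cyclicFreeProductHomEquiv p _ (E.symm (σ, τ)) i = σ :=
      congrArg Prod.fst (E.apply_symm_apply (σ, τ))
    simp only [hE, Finset.sum_const, Finset.card_univ, nsmul_eq_mul, Finset.mul_sum,
      Nat.card_eq_fintype_card]
    rfl
  rw [homExp, hsum, Nat.card_congr E, Nat.card_prod, Nat.cast_mul, mul_comm (Nat.card Others : ℝ)]
  exact mul_div_mul_right _ _ hcard

lemma homExp_homFixCount_cyclicGen_pow (i : Fin m) (d n : ℕ) :
    homExp (CyclicFreeProduct m p) n (fun φ => (homFixCount (cyclicGen p i ^ d) φ : ℝ)) =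
      (∑ σ : TorsionPerm (p i) (Fin n), (Nat.card {x // (σ.1 ^ d) x = x} : ℝ)) /
        torsionPermCount (p i) n := by
  rw [← homExp_generator]
  simp only [homFixCount, map_pow]
  rfl

lemma homExp_const (G : Type*) [Group G] (n : ℕ) [Finite (G →* Equiv.Perm (Fin n))] (a : ℝ) :
    homExp G n (fun _ => a) = a := by
  have hcard : (Nat.card (G →* Equiv.Perm (Fin n)) : ℝ) ≠ 0 := Nat.cast_ne_zero.mpr Nat.card_pos.ne'
  rw [homExp, tsum_const, nsmul_eq_mul, mul_div_cancel_left₀ _ hcard]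

theorem expected_fixed_points_finite_order_general (p : Fin m → ℕ) (g : CyclicFreeProduct m p)
    (hg : IsOfFinOrder g) :
    Tendsto (fun n : ℕ => homExp (CyclicFreeProduct m p) n (fun φ => (homFixCount g φ : ℝ)) /
      (n : ℝ) ^ ((1 : ℝ) / orderOf g)) atTop (𝓝 1) := by
  rcases eq_or_ne g 1 with rfl | hg_ne
  · refine tendsto_const_nhds.congr' ?_
    filter_upwards [eventually_gt_atTop 0] with n hn
    have : Finite (CyclicFreeProduct m p →* Equiv.Perm (Fin n)) :=
      .of_equiv _ (cyclicFreeProductHomEquiv p _).symm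
    have hn' : (n : ℝ) ≠ 0 := Nat.cast_ne_zero.mpr hn.ne'
    simp [homFixCount, homExp_const, hn']
  obtain ⟨i, d, y, hpi, hd, hzpowers, hconj⟩ := exists_zpowers_eq_and_isConj hg hg_ne
  have hfix (n : ℕ) (φ : CyclicFreeProduct m p →* Equiv.Perm (Fin n)) :
      homFixCount g φ = homFixCount (cyclicGen p i ^ d) φ :=
    (homFixCount_eq_of_isConj hconj φ).symm.trans (homFixCount_eq_of_zpowers_eq hzpowers φ)
  have hexponent : (1 : ℝ) / orderOf g = d / p i := by
    have hd0 : (d : ℝ) ≠ 0 := Nat.cast_ne_zero.mpr (left_ne_zero_of_mul (hd ▸ hpi))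
    rw [← hd, Nat.cast_mul, div_mul_cancel_left₀ hd0, one_div]
  simp only [hfix, homExp_homFixCount_cyclicGen_pow, hexponent]
  exact tendsto_sum_card_fixed_div_rpow hpi (Dvd.intro _ hd)

end ExpectedFixedPoints

theorem expected_fixed_points_finite_order (m : ℕ) (p : Fin m → ℕ) (hp : ∀ i, 2 ≤ p i)
    (g : CyclicFreeProduct m p) (hg : g ≠ 1) (k : ℕ) (hk : 0 < k) (hord : orderOf g = k) :
    Filter.Tendsto (fun n : ℕ =>
      homExp (CyclicFreeProduct m p) n (fun φ => (homFixCount g φ : ℝ)) /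
        (n : ℝ) ^ ((1 : ℝ) / (k : ℝ)))
      Filter.atTop (𝓝 1) := by
  subst hord
  exact expected_fixed_points_finite_order_general p g (orderOf_pos_iff.mp hk)
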